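/- Let f₀ : [0,1] → K be weakly increasing and f̂ : [0,1] → K measurable, K ⊂ ℝ bounded. Suppose there exist sets X₀, X₀' ⊂ [0,1], each of Lebesgue measure at least δ > 0, such that for all x ∈ X₀ and x' ∈ X₀': x' > x, f̂(x) > f̂(x') + ε, and f₀(x') > f₀(x) + ε, for some ε > 0. Then for every p ∈ (1,∞), ∫₀¹ |f̂*(x) - f₀(x)|^p dx ≤ ∫₀¹ |f̂(x) - f₀(x)|^p dx − δ·η_p, where η_p = inf { |v−t'|^p + |v'−t|^p − |v−t|^p − |v'−t'|^p : v,v',t,t' ∈ K, v' ≥ v+ε, t' ≥ t+ε } > 0. -/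

import Mathlib

/-!
Write `φ s = |s| ^ p`, with strictly increasing derivative `φ'`, let `K ⊆ [m, M]`, and abbreviate
`f = fhat`, `f* = rearr fhat`. Integrating
`φ'` from `m` to the first argument gives the layer-cake formula
`φ (v - t) = φ (m - t) + ∫ a in (m, M], 1_{a < v} φ' (a - t)`, so by Fubini (`loss_sub_eq`)

`∫ φ (f - f₀) - ∫ φ (f* - f₀) = ∫ a in (m, M], ∫ x, (1_{a < f x} - 1_{a < f* x}) φ' (a - f₀ x)`.

For each level `a`, the set `{f* > a}` is, up to the point `0`, the interval `(F a, 1]`, where `F`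
is the distribution function of `f`, and it has the same measure as `{f > a}`. As
`x ↦ φ' (a - f₀ x)` is decreasing, the inner integral is nonnegative by the bathtub principle. Let
`v = sup f` over `X₀'`, `v' = inf f` over `X₀`, `t = sup f₀` over `X₀` and `t' = inf f₀` over `X₀'`.
If `v ≤ a < v'`, then `X₀ ⊆ {f > a}` and `X₀' ⊆ {f ≤ a}`, and the quantitative form `bathtub`
bounds the inner integral below by `δ (φ' (a - t) - φ' (a - t'))`. Integrating this over `[v, v')`
yields `δ` times the cross difference of the loss at `(v, v', t, t')`. These four points lie in
the closed set `K` and have gaps at least `ε`, so the cross difference is at least the infimum in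
the statement. That infimum is attained by compactness and is positive by strict convexity.
-/

open MeasureTheory

/-- Increasing rearrangement of a function on [0,1]. -/
noncomputable def rearr (f : ℝ → ℝ) (x : ℝ) : ℝ :=
  sInf {y : ℝ | x ≤ (volume (Set.Icc (0:ℝ) 1 ∩ {u : ℝ | f u ≤ y})).toReal}

section

open Set Filter Topology

/-! ### Strict submodularity of the loss -/

/-- The derivative of `|s| ^ p`, `p > 1`, is strictly increasing. -/
lemma strictMono_deriv_abs_rpow {p : ℝ} (hp : 1 < p) :
    StrictMono (fun s : ℝ => p * |s| ^ (p - 2) * s) := by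
  refine strictMono_of_odd_strictMonoOn_nonneg (fun s => by simp) ?_
  have key : ∀ s : ℝ, 0 ≤ s → p * |s| ^ (p - 2) * s = p * s ^ (p - 1) := by
    intro s hs
    rcases hs.eq_or_lt with rfl | hs
    · rw [Real.zero_rpow (by linarith)]; simp
    · rw [abs_of_pos hs, mul_assoc, ← Real.rpow_add_one hs.ne']
      congr 2; ring
  intro s hs u hu hsu
  simp only [mem_Ici] at hs hu
  simp only [key s hs, key u hu]
  exact mul_lt_mul_of_pos_left (Real.rpow_lt_rpow hs hsu (by linarith)) (by linarith)

/-- Strict submodularity of `(v, t) ↦ |v - t| ^ p`. -/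
lemma cross_diff_pos {p : ℝ} (hp : 1 < p) {v v' t t' : ℝ} (hv : v < v') (ht : t < t') :
    0 < |v - t'| ^ p + |v' - t| ^ p - |v - t| ^ p - |v' - t'| ^ p := by
  have hd : ∀ s, HasDerivAt (fun s : ℝ => |s - t| ^ p - |s - t'| ^ p)
      (p * |s - t| ^ (p - 2) * (s - t) - p * |s - t'| ^ (p - 2) * (s - t')) s := fun s =>
    ((hasDerivAt_abs_rpow (s - t) hp).comp_sub_const s t).sub
      ((hasDerivAt_abs_rpow (s - t') hp).comp_sub_const s t')
  have hm : StrictMono (fun s : ℝ => |s - t| ^ p - |s - t'| ^ p) := by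
    refine strictMono_of_deriv_pos fun s => ?_
    rw [(hd s).deriv]
    have := strictMono_deriv_abs_rpow hp (show s - t' < s - t by linarith)
    simp only at this
    linarith
  have := hm hv
  simp only at this
  linarith

lemma isCompact_crossDiff {K : Set ℝ} (hK : IsCompact K) (ε : ℝ) {p : ℝ} (hp : 1 < p) :
    IsCompact {r : ℝ | ∃ v v' t t' : ℝ, v ∈ K ∧ v' ∈ K ∧ t ∈ K ∧ t' ∈ K ∧
        v + ε ≤ v' ∧ t + ε ≤ t' ∧
        r = |v - t'| ^ p + |v' - t| ^ p - |v - t| ^ p - |v' - t'| ^ p} := by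
  have hc : IsCompact ((K ×ˢ K ×ˢ K ×ˢ K) ∩
      {z : ℝ × ℝ × ℝ × ℝ | z.1 + ε ≤ z.2.1 ∧ z.2.2.1 + ε ≤ z.2.2.2}) := by
    refine (hK.prod (hK.prod (hK.prod hK))).inter_right (IsClosed.and ?_ ?_) <;>
      exact isClosed_le (by fun_prop) (by fun_prop)
  have hcont : Continuous (fun s : ℝ => |s| ^ p) :=
    continuous_abs.rpow_const (fun _ => Or.inr (by linarith))
  have hcont' : Continuous (fun z : ℝ × ℝ × ℝ × ℝ =>
      |z.1 - z.2.2.2| ^ p + |z.2.1 - z.2.2.1| ^ p - |z.1 - z.2.2.1| ^ p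
        - |z.2.1 - z.2.2.2| ^ p) := by
    have h1 := hcont.comp (show Continuous (fun z : ℝ × ℝ × ℝ × ℝ => z.1 - z.2.2.2) by fun_prop)
    have h2 := hcont.comp (show Continuous (fun z : ℝ × ℝ × ℝ × ℝ => z.2.1 - z.2.2.1) by fun_prop)
    have h3 := hcont.comp (show Continuous (fun z : ℝ × ℝ × ℝ × ℝ => z.1 - z.2.2.1) by fun_prop)
    have h4 := hcont.comp (show Continuous (fun z : ℝ × ℝ × ℝ × ℝ => z.2.1 - z.2.2.2) by fun_prop)
    exact ((h1.add h2).sub h3).sub h4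
  convert hc.image hcont' using 1
  ext r
  constructor
  · rintro ⟨v, v', t, t', h1, h2, h3, h4, h5, h6, rfl⟩
    exact ⟨(v, v', t, t'), ⟨⟨h1, h2, h3, h4⟩, h5, h6⟩, rfl⟩
  · rintro ⟨⟨v, v', t, t'⟩, ⟨⟨h1, h2, h3, h4⟩, h5, h6⟩, rfl⟩
    exact ⟨v, v', t, t', h1, h2, h3, h4, h5, h6, rfl⟩

/-! ### Distribution and quantile functions -/

/-- Distribution function of `f` with respect to Lebesgue measure on `[0,1]`. -/
noncomputable def distFun (f : ℝ → ℝ) (y : ℝ) : ℝ :=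
  (volume (Icc (0:ℝ) 1 ∩ {u : ℝ | f u ≤ y})).toReal

lemma distFun_mem (f : ℝ → ℝ) (y : ℝ) : distFun f y ∈ Icc (0:ℝ) 1 := by
  refine ⟨ENNReal.toReal_nonneg, ?_⟩
  have := measureReal_mono (μ := volume) (s₁ := Icc (0:ℝ) 1 ∩ {u : ℝ | f u ≤ y})
    (s₂ := Icc (0:ℝ) 1) inter_subset_left (by simp)
  simpa [Measure.real, distFun] using this

lemma distFun_mono (f : ℝ → ℝ) : Monotone (distFun f) := by
  intro y z hyz
  refine measureReal_mono (μ := volume) (inter_subset_inter_right _ fun u hu => le_trans hu hyz) ?_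
  exact ((measure_mono inter_subset_left).trans_lt (by simp)).ne

lemma distFun_right_continuous {f : ℝ → ℝ} (hf : Measurable f) (y : ℝ) :
    Tendsto (distFun f) (𝓝[>] y) (𝓝 (distFun f y)) := by
  have : IsProbabilityMeasure (volume.restrict (Icc (0:ℝ) 1)) := ⟨by simp⟩
  have := Measure.isProbabilityMeasure_map (μ := volume.restrict (Icc (0:ℝ) 1)) hf.aemeasurable
  have h : distFun f = ProbabilityTheory.cdf ((volume.restrict (Icc (0:ℝ) 1)).map f) := by
    ext z
    rw [ProbabilityTheory.cdf_eq_real, Measure.real, Measure.map_apply hf measurableSet_Iic,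
      Measure.restrict_apply (hf measurableSet_Iic), inter_comm]
    rfl
  rw [h]
  exact ((ProbabilityTheory.cdf _).right_continuous y).tendsto.mono_left
    (nhdsWithin_mono _ Ioi_subset_Ici_self)

/-- The Galois connection between a quantile function and its distribution function. It fails at
`x = 0`, where the infimum in `rearr` is over all of `ℝ`. -/
lemma rearr_le_iff {f : ℝ → ℝ} (hf : Measurable f) {m M : ℝ}
    (hb : ∀ x ∈ Icc (0:ℝ) 1, f x ∈ Icc m M) {x : ℝ} (hx : x ∈ Ioc (0:ℝ) 1) (a : ℝ) :
    rearr f x ≤ a ↔ x ≤ distFun f a := by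
  have hlow : ∀ y, y < m → distFun f y = 0 := by
    intro y hy
    have : Icc (0:ℝ) 1 ∩ {u : ℝ | f u ≤ y} = ∅ := by
      ext u
      simp only [mem_inter_iff, mem_ofPred_eq, mem_empty_iff_false, iff_false, not_and, not_le]
      exact fun hu => hy.trans_le (hb u hu).1
    simp [distFun, this]
  have hne : M ∈ {y : ℝ | x ≤ distFun f y} := by
    have : Icc (0:ℝ) 1 ∩ {u : ℝ | f u ≤ M} = Icc 0 1 :=
      inter_eq_left.2 fun u hu => (hb u hu).2
    simp [distFun, this, hx.2]
  have hbdd : BddBelow {y : ℝ | x ≤ distFun f y} := by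
    refine ⟨m, fun y hy => ?_⟩
    by_contra hlt
    have := hlow y (not_le.1 hlt)
    simp only [mem_ofPred_eq] at hy
    linarith [hx.1]
  change sInf {y : ℝ | x ≤ distFun f y} ≤ a ↔ _
  refine ⟨fun h => le_trans ?_ (distFun_mono f h), fun h => csInf_le hbdd h⟩
  refine ge_of_tendsto (distFun_right_continuous hf _) ?_
  filter_upwards [self_mem_nhdsWithin] with y hy
  obtain ⟨z, hz, hzy⟩ := exists_lt_of_csInf_lt ⟨M, hne⟩ hy
  exact le_trans hz (distFun_mono f hzy.le)

/-- A version of `rearr f` on `[0,1]` that takes the value `m` at the exceptional point `0`. -/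
noncomputable def rearrFix (f : ℝ → ℝ) (m : ℝ) : ℝ → ℝ :=
  (Ioc (0:ℝ) 1).piecewise (rearr f) fun _ => m

lemma rearrFix_le_iff {f : ℝ → ℝ} (hf : Measurable f) {m M : ℝ}
    (hb : ∀ x ∈ Icc (0:ℝ) 1, f x ∈ Icc m M) {x : ℝ} (hx : x ∈ Icc (0:ℝ) 1) {a : ℝ} (ha : m ≤ a) :
    rearrFix f m x ≤ a ↔ x ≤ distFun f a := by
  by_cases h : x ∈ Ioc (0:ℝ) 1
  · rw [rearrFix, piecewise_eq_of_mem _ _ _ h, rearr_le_iff hf hb h]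
  · have h0 : x = 0 := le_antisymm (not_lt.1 fun h' => h ⟨h', hx.2⟩) hx.1
    rw [rearrFix, piecewise_eq_of_notMem _ _ _ h, h0]
    exact iff_of_true ha (distFun_mem f a).1

lemma rearrFix_mem {f : ℝ → ℝ} (hf : Measurable f) {m M : ℝ}
    (hb : ∀ x ∈ Icc (0:ℝ) 1, f x ∈ Icc m M) {x : ℝ} (hx : x ∈ Icc (0:ℝ) 1) :
    rearrFix f m x ∈ Icc m M := by
  have h01 := hb x hx
  have hmM : m ≤ M := h01.1.trans h01.2
  constructor
  · by_cases h : x ∈ Ioc (0:ℝ) 1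
    · rw [rearrFix, piecewise_eq_of_mem _ _ _ h]
      refine le_of_forall_gt_imp_ge_of_dense fun a ha => ?_
      by_contra hlt
      push Not at hlt
      obtain ⟨y, hy1, hy2⟩ := exists_between hlt
      have h1 := (rearr_le_iff hf hb h y).1 (ha.le.trans hy1.le)
      have h2 : Icc (0:ℝ) 1 ∩ {u : ℝ | f u ≤ y} = ∅ := by
        ext u
        simp only [mem_inter_iff, mem_ofPred_eq, mem_empty_iff_false, iff_false, not_and, not_le]
        exact fun hu => hy2.trans_le (hb u hu).1
      simp only [distFun, h2, measure_empty, ENNReal.toReal_zero] at h1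
      linarith [h.1]
    · rw [rearrFix, piecewise_eq_of_notMem _ _ _ h]
  · rw [rearrFix_le_iff hf hb hx hmM]
    have : Icc (0:ℝ) 1 ∩ {u : ℝ | f u ≤ M} = Icc 0 1 :=
      inter_eq_left.2 fun u hu => (hb u hu).2
    simp [distFun, this, hx.2]

lemma measurable_rearrFix {f : ℝ → ℝ} (hf : Measurable f) {m M : ℝ}
    (hb : ∀ x ∈ Icc (0:ℝ) 1, f x ∈ Icc m M) : Measurable (rearrFix f m) := by
  refine measurable_of_restrict_of_restrict_compl (measurableSet_Ioc (a := (0:ℝ)) (b := 1)) ?_ ?_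
  · refine measurable_of_Iic fun a => ?_
    have : (Ioc (0:ℝ) 1).domRestrict (rearrFix f m) ⁻¹' Iic a
        = (fun x : Ioc (0:ℝ) 1 => (x : ℝ)) ⁻¹' Iic (distFun f a) := by
      ext x
      simp only [mem_preimage, domRestrict_apply, mem_Iic]
      rw [rearrFix, piecewise_eq_of_mem _ _ _ x.2, rearr_le_iff hf hb x.2]
    rw [this]
    exact measurable_subtype_coe measurableSet_Iic
  · have : (Ioc (0:ℝ) 1)ᶜ.domRestrict (rearrFix f m) = fun _ => m := by
      ext x
      rw [domRestrict_apply, rearrFix, piecewise_eq_of_notMem _ _ _ x.2]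
    rw [this]
    exact measurable_const

/-! ### The bathtub principle -/

/-- Quantitative bathtub principle: for decreasing `g`, moving the mass of `E` to the upper
interval `(c, 1]` of equal measure lowers `∫ g`, and by at least `δ (G - G')` if `E` contains mass
`δ` on which `g ≥ G` and misses mass `δ` on which `g ≤ G'`. -/
lemma bathtub {g : ℝ → ℝ} (hgm : Measurable g) (hg : AntitoneOn g (Icc 0 1)) {c : ℝ}
    (hc : c ∈ Icc (0:ℝ) 1) {E A A' : Set ℝ} (hE : MeasurableSet E) (hA : MeasurableSet A)
    (hA' : MeasurableSet A') (hEc : volume.real (Icc 0 1 ∩ E) = 1 - c)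
    (hAE : A ⊆ Icc 0 1 ∩ E) (hAE' : A' ⊆ Icc 0 1 \ E) {δ G G' : ℝ}
    (hδA : δ ≤ volume.real A) (hδA' : δ ≤ volume.real A')
    (hδ : 0 ≤ δ) (hG : ∀ x ∈ A, G ≤ g x) (hG' : ∀ x ∈ A', g x ≤ G') :
    δ * (G - G') ≤ ∫ x in Icc (0:ℝ) 1,
      (E.indicator (fun _ => (1:ℝ)) x - (Ioi c).indicator (fun _ => (1:ℝ)) x) * g x := by
  have hU : volume.real (Icc 0 1 ∩ Ioi c) = 1 - c := by
    have : Icc (0:ℝ) 1 ∩ Ioi c = Ioc c 1 := by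
      ext x; simp only [mem_inter_iff, mem_Icc, mem_Ioi, mem_Ioc]
      constructor
      · rintro ⟨⟨_, h⟩, h'⟩; exact ⟨h', h⟩
      · rintro ⟨h, h'⟩; exact ⟨⟨hc.1.trans h.le, h'⟩, h⟩
    rw [this, Real.volume_real_Ioc_of_le hc.2]
  set μ := volume.restrict (Icc (0:ℝ) 1) with hμ
  have : IsFiniteMeasure μ := ⟨by simp [hμ]⟩
  have hind : ∀ S : Set ℝ, MeasurableSet S → Integrable (S.indicator (fun _ => (1:ℝ))) μ :=
    fun S hS => (integrable_const 1).indicator hS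
  have hval : ∀ S : Set ℝ, MeasurableSet S →
      ∫ x, S.indicator (fun _ => (1:ℝ)) x ∂μ = volume.real (Icc 0 1 ∩ S) := by
    intro S hS
    rw [integral_indicator_const _ hS, hμ, measureReal_restrict_apply hS, inter_comm]
    simp
  set w : ℝ → ℝ := fun x =>
    E.indicator (fun _ => (1:ℝ)) x - (Ioi c).indicator (fun _ => (1:ℝ)) x with hw
  have hwi : Integrable w μ := (hind E hE).sub (hind _ measurableSet_Ioi)
  -- Equal masses allow `g` to be centred at its value `γ` at the cut point `c`.
  have hw0 : ∫ x, w x ∂μ = 0 := by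
    rw [hw, integral_sub (hind E hE) (hind _ measurableSet_Ioi), hval E hE,
      hval _ measurableSet_Ioi, hEc, hU, sub_self]
  have hwg : Integrable (fun x => w x * g x) μ := by
    refine hwi.mul_bdd (c := max |g 1| |g 0|) hgm.aestronglyMeasurable ?_
    filter_upwards [ae_restrict_mem measurableSet_Icc] with x hx
    rw [Real.norm_eq_abs]
    exact abs_le_max_abs_abs (hg hx (by simp) hx.2) (hg (by simp) hx hx.1)
  set γ := g c with hγ
  have hsub : ∫ x, w x * g x ∂μ = ∫ x, (w x * g x - w x * γ) ∂μ := by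
    rw [integral_sub hwg (hwi.mul_const γ), integral_mul_const, hw0]; ring
  have hlow : ∫ x, (A.indicator (fun _ => (1:ℝ)) x * max (G - γ) 0
        + A'.indicator (fun _ => (1:ℝ)) x * max (γ - G') 0) ∂μ
      ≤ ∫ x, (w x * g x - w x * γ) ∂μ := by
    refine integral_mono_ae (((hind A hA).mul_const _).add ((hind A' hA').mul_const _))
      (hwg.sub (hwi.mul_const γ)) ?_
    filter_upwards [ae_restrict_mem measurableSet_Icc] with x hx
    have h1 : x ≤ c → γ ≤ g x := fun h => hg hx hc h
    have h2 : c < x → g x ≤ γ := fun h => hg hc hx h.le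
    by_cases hxA : x ∈ A
    · have hxE := (hAE hxA).2
      have hxA' : x ∉ A' := fun h => (hAE' h).2 hxE
      have := hG x hxA
      by_cases hxc : c < x
      · have := h2 hxc
        simp only [hw, indicator_of_mem hxA, indicator_of_notMem hxA', indicator_of_mem hxE,
          indicator_of_mem (mem_Ioi.2 hxc)]
        rw [max_eq_right (by linarith)]; simp
      · have := h1 (not_lt.1 hxc)
        simp only [hw, indicator_of_mem hxA, indicator_of_notMem hxA', indicator_of_mem hxE,
          indicator_of_notMem (show x ∉ Ioi c from hxc)]
        have := max_le (show G - γ ≤ g x - γ by linarith) (show 0 ≤ g x - γ by linarith)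
        linarith
    · by_cases hxA' : x ∈ A'
      · have hxE := (hAE' hxA').2
        have := hG' x hxA'
        by_cases hxc : c < x
        · have := h2 hxc
          simp only [hw, indicator_of_notMem hxA, indicator_of_mem hxA', indicator_of_notMem hxE,
            indicator_of_mem (mem_Ioi.2 hxc)]
          have := max_le (show γ - G' ≤ γ - g x by linarith) (show 0 ≤ γ - g x by linarith)
          linarith
        · have := h1 (not_lt.1 hxc)
          simp only [hw, indicator_of_notMem hxA, indicator_of_mem hxA', indicator_of_notMem hxE,
            indicator_of_notMem (show x ∉ Ioi c from hxc)]
          rw [max_eq_right (by linarith : γ - G' ≤ 0)]; simp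
      · simp only [hw, indicator_of_notMem hxA, indicator_of_notMem hxA']
        by_cases hxE : x ∈ E <;> by_cases hxc : c < x
        · simp [hxE, hxc]
        · have := h1 (not_lt.1 hxc)
          simp [hxE, hxc, this]
        · have := h2 hxc
          simp [hxE, hxc, this]
        · simp [hxE, hxc]
  rw [integral_add ((hind A hA).mul_const _) ((hind A' hA').mul_const _), integral_mul_const,
    integral_mul_const, hval A hA, hval A' hA', inter_eq_right.2 (hAE.trans inter_subset_left),
    inter_eq_right.2 (hAE'.trans sdiff_subset)] at hlow
  rw [hsub]
  refine le_trans ?_ hlow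
  have e1 := mul_le_mul_of_nonneg_right hδA (le_max_right (G - γ) 0)
  have e2 := mul_le_mul_of_nonneg_right hδA' (le_max_right (γ - G') 0)
  have e3 := mul_le_mul_of_nonneg_left
    (add_le_add (le_max_left (G - γ) 0) (le_max_left (γ - G') 0)) hδ
  linarith

/-! ### Layer-cake representation of the loss -/

/-- Layer-cake formula in the first argument of the loss `φ (v - t)`. -/
lemma layer {φ φ' : ℝ → ℝ} (hφ : ∀ s, HasDerivAt φ (φ' s) s) (hm : Monotone φ')
    {m M v t : ℝ} (hv : v ∈ Icc m M) :
    ∫ a in Ioc m M, (Iio v).indicator (fun _ => (1:ℝ)) a * φ' (a - t) = φ (v - t) - φ (m - t) := by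
  have hmt : Monotone fun a => φ' (a - t) := fun a b h => hm (by linarith)
  have h1 : ∀ a, (Iio v).indicator (fun _ => (1:ℝ)) a * φ' (a - t)
      = (Iio v).indicator (fun a => φ' (a - t)) a := by
    intro a; by_cases h : a ∈ Iio v <;> simp [h]
  simp_rw [h1]
  rw [setIntegral_indicator measurableSet_Iio]
  have h2 : (Ioc m M ∩ Iio v : Set ℝ) =ᵐ[volume] (Ioc m v : Set ℝ) := by
    have : Ioc m M ∩ Iio v = Ioo m v := by
      ext a; simp only [mem_inter_iff, mem_Ioc, mem_Iio, mem_Ioo]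
      constructor
      · rintro ⟨⟨h, _⟩, h'⟩; exact ⟨h, h'⟩
      · rintro ⟨h, h'⟩; exact ⟨⟨h, h'.le.trans hv.2⟩, h'⟩
    rw [this]; exact Ioo_ae_eq_Ioc
  rw [setIntegral_congr_set h2, ← intervalIntegral.integral_of_le hv.1]
  exact intervalIntegral.integral_eq_sub_of_hasDerivAt
    (fun s _ => (hφ (s - t)).comp_sub_const s t) hmt.intervalIntegrable

lemma integrable_layer {φ' : ℝ → ℝ} (hm : Monotone φ') {m M : ℝ}
    {f f₀ : ℝ → ℝ} (hf : Measurable f) (hf₀ : Measurable f₀)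
    (hb₀ : ∀ x ∈ Icc (0:ℝ) 1, f₀ x ∈ Icc m M) :
    Integrable (fun z : ℝ × ℝ =>
      (Iio (f z.1)).indicator (fun _ => (1:ℝ)) z.2 * φ' (z.2 - f₀ z.1))
      ((volume.restrict (Icc (0:ℝ) 1)).prod (volume.restrict (Ioc m M))) := by
  have hmeas : Measurable (fun z : ℝ × ℝ =>
      (Iio (f z.1)).indicator (fun _ => (1:ℝ)) z.2 * φ' (z.2 - f₀ z.1)) := by
    refine Measurable.mul ?_ (hm.measurable.comp (by fun_prop))
    have : (fun z : ℝ × ℝ => (Iio (f z.1)).indicator (fun _ => (1:ℝ)) z.2)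
        = {z : ℝ × ℝ | z.2 < f z.1}.indicator (fun _ => (1:ℝ)) := rfl
    rw [this]
    exact measurable_const.indicator (measurableSet_lt (by fun_prop) (by fun_prop))
  refine Integrable.of_bound hmeas.aestronglyMeasurable (max |φ' (m - M)| |φ' (M - m)|) ?_
  rw [Measure.prod_restrict]
  filter_upwards [ae_restrict_mem (measurableSet_Icc.prod measurableSet_Ioc)] with z hz
  have h0 := hb₀ z.1 hz.1
  have h1 : |φ' (z.2 - f₀ z.1)| ≤ max |φ' (m - M)| |φ' (M - m)| :=
    abs_le_max_abs_abs (hm (by linarith [hz.2.1, h0.2])) (hm (by linarith [hz.2.2, h0.1]))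
  by_cases h : z.2 ∈ Iio (f z.1)
  · simpa [h] using h1
  · simp only [indicator_of_notMem h, zero_mul, norm_zero]
    exact (abs_nonneg _).trans (le_max_left _ _)

lemma integrable_loss {φ : ℝ → ℝ} (hφ : Continuous φ) {m M : ℝ} {f f₀ : ℝ → ℝ}
    (hf : Measurable f) (hf₀ : Measurable f₀) (hb : ∀ x ∈ Icc (0:ℝ) 1, f x ∈ Icc m M)
    (hb₀ : ∀ x ∈ Icc (0:ℝ) 1, f₀ x ∈ Icc m M) :
    Integrable (fun x => φ (f x - f₀ x)) (volume.restrict (Icc (0:ℝ) 1)) := by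
  obtain ⟨C, hC⟩ := (isCompact_Icc (a := m - M) (b := M - m)).exists_bound_of_continuousOn
    hφ.continuousOn
  refine Integrable.of_bound (hφ.measurable.comp (hf.sub hf₀)).aestronglyMeasurable C ?_
  filter_upwards [ae_restrict_mem measurableSet_Icc] with x hx
  have h1 := hb x hx
  have h2 := hb₀ x hx
  exact hC _ ⟨by linarith [h1.1, h2.2], by linarith [h1.2, h2.1]⟩

/-- The improvement in loss is the integral over levels `a` of the bathtub deficits. -/
lemma loss_sub_eq {φ φ' : ℝ → ℝ} (hφ : ∀ s, HasDerivAt φ (φ' s) s) (hm : Monotone φ')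
    {m M : ℝ} {f q f₀ : ℝ → ℝ} (hf : Measurable f) (hq : Measurable q) (hf₀ : Measurable f₀)
    (hb : ∀ x ∈ Icc (0:ℝ) 1, f x ∈ Icc m M) (hbq : ∀ x ∈ Icc (0:ℝ) 1, q x ∈ Icc m M)
    (hb₀ : ∀ x ∈ Icc (0:ℝ) 1, f₀ x ∈ Icc m M) :
    (∫ x in Icc (0:ℝ) 1, φ (f x - f₀ x)) - ∫ x in Icc (0:ℝ) 1, φ (q x - f₀ x)
      = ∫ a in Ioc m M, ∫ x in Icc (0:ℝ) 1,
        ((Iio (f x)).indicator (fun _ => (1:ℝ)) a - (Iio (q x)).indicator (fun _ => (1:ℝ)) a)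
          * φ' (a - f₀ x) := by
  have hc : Continuous φ := continuous_iff_continuousAt.2 fun s => (hφ s).continuousAt
  have hi := (integrable_layer hm hf hf₀ hb₀).sub (integrable_layer hm hq hf₀ hb₀)
  rw [← integral_sub (integrable_loss hc hf hf₀ hb hb₀) (integrable_loss hc hq hf₀ hbq hb₀)]
  simp_rw [sub_mul]
  rw [← integral_integral_swap hi]
  refine setIntegral_congr_fun measurableSet_Icc fun x hx => ?_
  have hInt : ∀ v ∈ Icc m M, IntegrableOn
      (fun a => (Iio v).indicator (fun _ => (1:ℝ)) a * φ' (a - f₀ x)) (Ioc m M) := by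
    intro v _
    have hmt : Monotone fun a => φ' (a - f₀ x) := fun a b h => hm (by linarith)
    have h1 : (fun a => (Iio v).indicator (fun _ => (1:ℝ)) a * φ' (a - f₀ x))
        = (Iio v).indicator (fun a => φ' (a - f₀ x)) := by
      ext a; by_cases h : a ∈ Iio v <;> simp [h]
    rw [h1]
    exact ((hmt.monotoneOn _).integrableOn_isCompact isCompact_Icc |>.mono_set
      Ioc_subset_Icc_self).indicator measurableSet_Iio
  rw [integral_sub (hInt _ (hb x hx)) (hInt _ (hbq x hx)), layer hφ hm (hb x hx),
    layer hφ hm (hbq x hx)]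
  ring

/-! ### Improvement under rearrangement -/

/-- The bathtub principle for the superlevel sets `{f > a}` and `{f* > a}`. -/
lemma level_deficit {φ' : ℝ → ℝ} (hm : Monotone φ') {m M : ℝ} {f f₀ : ℝ → ℝ}
    (hf : Measurable f) (hf₀ : Measurable f₀) (hf₀m : MonotoneOn f₀ (Icc 0 1))
    (hb : ∀ x ∈ Icc (0:ℝ) 1, f x ∈ Icc m M) {a : ℝ} (ha : m ≤ a)
    {A A' : Set ℝ} (hA : MeasurableSet A) (hA' : MeasurableSet A')
    (hA1 : A ⊆ Icc 0 1) (hA1' : A' ⊆ Icc 0 1) {δ t t' : ℝ} (hδ : 0 ≤ δ)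
    (hδA : δ ≤ volume.real A) (hδA' : δ ≤ volume.real A')
    (hAf : ∀ x ∈ A, a < f x ∧ f₀ x ≤ t) (hAf' : ∀ x ∈ A', f x ≤ a ∧ t' ≤ f₀ x) :
    δ * (φ' (a - t) - φ' (a - t')) ≤ ∫ x in Icc (0:ℝ) 1,
      ((Iio (f x)).indicator (fun _ => (1:ℝ)) a
        - (Iio (rearrFix f m x)).indicator (fun _ => (1:ℝ)) a) * φ' (a - f₀ x) := by
  have hE : MeasurableSet {x | a < f x} := measurableSet_lt measurable_const hf
  have hEc : volume.real (Icc 0 1 ∩ {x | a < f x}) = 1 - distFun f a := by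
    have hset : Icc (0:ℝ) 1 ∩ {x | a < f x} = Icc 0 1 \ (Icc 0 1 ∩ {u : ℝ | f u ≤ a}) := by
      ext x
      simp only [mem_inter_iff, mem_ofPred_eq, Set.mem_sdiff, not_and, not_le]
      tauto
    rw [hset, measureReal_sdiff inter_subset_left
      (measurableSet_Icc.inter (measurableSet_le hf measurable_const)) (by simp),
      Real.volume_real_Icc_of_le zero_le_one, sub_zero]
    rfl
  have hg : AntitoneOn (fun x => φ' (a - f₀ x)) (Icc 0 1) := fun x hx y hy hxy =>
    hm (by linarith [hf₀m hx hy hxy])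
  have := bathtub (g := fun x => φ' (a - f₀ x)) (hm.measurable.comp (by fun_prop)) hg
    (distFun_mem f a) hE hA hA' hEc (fun x hx => ⟨hA1 hx, (hAf x hx).1⟩)
    (fun x hx => ⟨hA1' hx, not_lt.2 (hAf' x hx).1⟩) hδA hδA' hδ
    (G := φ' (a - t)) (G' := φ' (a - t')) (fun x hx => hm (by linarith [(hAf x hx).2]))
    (fun x hx => hm (by linarith [(hAf' x hx).2]))
  refine this.trans_eq (setIntegral_congr_fun measurableSet_Icc fun x hx => ?_)
  have h2 : x ∈ Ioi (distFun f a) ↔ a ∈ Iio (rearrFix f m x) := by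
    rw [mem_Ioi, mem_Iio, ← not_le, ← not_le, rearrFix_le_iff hf hb hx ha]
  have h3 : x ∈ {x | a < f x} ↔ a ∈ Iio (f x) := Iff.rfl
  simp only [indicator_apply, h2, h3]

/-- The quantitative improvement for a differentiable convex loss `φ (v - t)`. The sets `X` and `X'`
may be nonmeasurable. -/
lemma loss_improvement {φ φ' : ℝ → ℝ} (hφ : ∀ s, HasDerivAt φ (φ' s) s) (hm : Monotone φ')
    {m M : ℝ} {f f₀ : ℝ → ℝ} (hf : Measurable f) (hf₀ : Measurable f₀)
    (hf₀m : MonotoneOn f₀ (Icc 0 1)) (hb : ∀ x ∈ Icc (0:ℝ) 1, f x ∈ Icc m M)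
    (hb₀ : ∀ x ∈ Icc (0:ℝ) 1, f₀ x ∈ Icc m M) {X X' : Set ℝ} (hX : X ⊆ Icc 0 1)
    (hX' : X' ⊆ Icc 0 1) {δ : ℝ} (hδ : 0 ≤ δ) (hδX : δ ≤ volume.real X)
    (hδX' : δ ≤ volume.real X') {v v' t t' : ℝ} (hv : v ∈ Icc m M) (hv' : v' ∈ Icc m M)
    (hvv : v ≤ v') (hXf : ∀ x ∈ X, v' ≤ f x ∧ f₀ x ≤ t)
    (hXf' : ∀ x ∈ X', f x ≤ v ∧ t' ≤ f₀ x) :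
    ∫ x in Icc (0:ℝ) 1, φ (rearr f x - f₀ x) ≤ (∫ x in Icc (0:ℝ) 1, φ (f x - f₀ x))
      - δ * (φ (v - t') + φ (v' - t) - φ (v - t) - φ (v' - t')) := by
  have hrep : ∫ x in Icc (0:ℝ) 1, φ (rearr f x - f₀ x)
      = ∫ x in Icc (0:ℝ) 1, φ (rearrFix f m x - f₀ x) := by
    rw [integral_Icc_eq_integral_Ioc, integral_Icc_eq_integral_Ioc]
    refine setIntegral_congr_fun measurableSet_Ioc fun x hx => ?_
    simp only [rearrFix, piecewise_eq_of_mem _ _ _ hx]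
  have hq := measurable_rearrFix hf hb
  have hbq : ∀ x ∈ Icc (0:ℝ) 1, rearrFix f m x ∈ Icc m M := fun x hx => rearrFix_mem hf hb hx
  have hsub := loss_sub_eq hφ hm hf hq hf₀ hb hbq hb₀
  -- Measurable hulls of `X` and `X'` on which the same inequalities hold.
  set A : Set ℝ := Icc 0 1 ∩ {x | v' ≤ f x ∧ f₀ x ≤ t} with hA
  set A' : Set ℝ := Icc 0 1 ∩ {x | f x ≤ v ∧ t' ≤ f₀ x} with hA'
  have hAm : MeasurableSet A := measurableSet_Icc.inter
    ((measurableSet_le measurable_const hf).inter (measurableSet_le hf₀ measurable_const))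
  have hAm' : MeasurableSet A' := measurableSet_Icc.inter
    ((measurableSet_le hf measurable_const).inter (measurableSet_le measurable_const hf₀))
  have hδA : δ ≤ volume.real A := hδX.trans (measureReal_mono (fun x hx => ⟨hX hx, hXf x hx⟩)
    ((measure_mono inter_subset_left).trans_lt (by simp)).ne)
  have hδA' : δ ≤ volume.real A' := hδX'.trans (measureReal_mono
    (fun x hx => ⟨hX' hx, hXf' x hx⟩) ((measure_mono inter_subset_left).trans_lt (by simp)).ne)
  have hi := ((integrable_layer hm hf hf₀ hb₀).sub (integrable_layer hm hq hf₀ hb₀)).integral_prod_right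
  have hmt : ∀ s, Monotone fun a => φ' (a - s) := fun s a b h => hm (by linarith)
  have hftc : ∀ s, ∫ a in Ico v v', φ' (a - s) = φ (v' - s) - φ (v - s) := by
    intro s
    rw [integral_Ico_eq_integral_Ioc, ← intervalIntegral.integral_of_le hvv]
    exact intervalIntegral.integral_eq_sub_of_hasDerivAt
      (fun u _ => (hφ (u - s)).comp_sub_const u s) (hmt s).intervalIntegrable
  have hInt : ∀ s, IntegrableOn (fun a => φ' (a - s)) (Ico v v') := fun s =>
    (((hmt s).monotoneOn _).integrableOn_isCompact isCompact_Icc).mono_set Ico_subset_Icc_self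
  have hD : IntegrableOn (fun a => δ * (φ' (a - t) - φ' (a - t'))) (Ico v v') :=
    ((hInt t).sub (hInt t')).const_mul δ
  have hval : ∫ a in Ioc m M, (Ico v v').indicator (fun a => δ * (φ' (a - t) - φ' (a - t'))) a
      = δ * (φ (v - t') + φ (v' - t) - φ (v - t) - φ (v' - t')) := by
    have h2 : (Ioc m M ∩ Ico v v' : Set ℝ) =ᵐ[volume] (Ico v v' : Set ℝ) := by
      have h3 : (Icc m M ∩ Ico v v' : Set ℝ) = Ico v v' := inter_eq_right.2 fun a ha =>
        ⟨hv.1.trans ha.1, ha.2.le.trans hv'.2⟩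
      have h4 : (Ioc m M ∩ Ico v v' : Set ℝ) =ᵐ[volume] (Icc m M ∩ Ico v v' : Set ℝ) :=
        Ioc_ae_eq_Icc.inter (ae_eq_refl _)
      rwa [h3] at h4
    rw [setIntegral_indicator measurableSet_Ico, setIntegral_congr_set h2, integral_const_mul,
      integral_sub (hInt t) (hInt t'), hftc, hftc]
    ring
  have hle : ∫ a in Ioc m M, (Ico v v').indicator (fun a => δ * (φ' (a - t) - φ' (a - t'))) a
      ≤ ∫ a in Ioc m M, ∫ x in Icc (0:ℝ) 1,
        ((Iio (f x)).indicator (fun _ => (1:ℝ)) a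
          - (Iio (rearrFix f m x)).indicator (fun _ => (1:ℝ)) a) * φ' (a - f₀ x) := by
    simp_rw [sub_mul]
    refine setIntegral_mono_on
      ((integrable_indicator_iff measurableSet_Ico).2 hD).integrableOn hi measurableSet_Ioc ?_
    intro a ha
    simp_rw [← sub_mul]
    by_cases hav : a ∈ Ico v v'
    · rw [indicator_of_mem hav]
      exact level_deficit hm hf hf₀ hf₀m hb ha.1.le hAm hAm' inter_subset_left
        inter_subset_left hδ hδA hδA'
        (fun x hx => ⟨hav.2.trans_le hx.2.1, hx.2.2⟩) (fun x hx => ⟨hx.2.1.trans hav.1, hx.2.2⟩)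
    · rw [indicator_of_notMem hav]
      have := level_deficit hm hf hf₀ hf₀m hb ha.1.le (A := ∅) (A' := ∅) (t := 0) (t' := 0)
        MeasurableSet.empty MeasurableSet.empty (empty_subset _) (empty_subset _) le_rfl
        (by simp) (by simp) (by simp) (by simp)
      simpa only [zero_mul] using this
  rw [hrep]
  linarith

end

/-- Strict improvement in `L^p` error, `p ∈ (1,∞)`, when the original estimate is
`ε`-decreasing on sets of measure ≥ δ over which the target is `ε`-increasing. -/
theorem rearr_strictly_reduces_Lp_error (K : Set ℝ) (hK : IsCompact K)
    (f₀ fhat : ℝ → ℝ)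
    (hf₀K : ∀ x ∈ Set.Icc (0:ℝ) 1, f₀ x ∈ K)
    (hfhatK : ∀ x ∈ Set.Icc (0:ℝ) 1, fhat x ∈ K)
    (hf₀mono : MonotoneOn f₀ (Set.Icc (0:ℝ) 1))
    (hf₀meas : Measurable f₀) (hfhatmeas : Measurable fhat)
    (X₀ X₀' : Set ℝ) (hX₀ : X₀ ⊆ Set.Icc (0:ℝ) 1) (hX₀' : X₀' ⊆ Set.Icc (0:ℝ) 1)
    (δ : ℝ) (hδ : 0 < δ)
    (hmX₀ : δ ≤ (volume X₀).toReal) (hmX₀' : δ ≤ (volume X₀').toReal)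
    (ε : ℝ) (hε : 0 < ε)
    (hviol : ∀ x ∈ X₀, ∀ x' ∈ X₀',
      x < x' ∧ fhat x' + ε < fhat x ∧ f₀ x + ε < f₀ x')
    (p : ℝ) (hp : 1 < p) :
    0 < sInf {r : ℝ | ∃ v v' t t' : ℝ, v ∈ K ∧ v' ∈ K ∧ t ∈ K ∧ t' ∈ K ∧
        v + ε ≤ v' ∧ t + ε ≤ t' ∧
        r = |v - t'| ^ p + |v' - t| ^ p - |v - t| ^ p - |v' - t'| ^ p} ∧
      (∫ x in Set.Icc (0:ℝ) 1, |rearr fhat x - f₀ x| ^ p) ≤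
        (∫ x in Set.Icc (0:ℝ) 1, |fhat x - f₀ x| ^ p) -
          δ * sInf {r : ℝ | ∃ v v' t t' : ℝ, v ∈ K ∧ v' ∈ K ∧ t ∈ K ∧ t' ∈ K ∧
            v + ε ≤ v' ∧ t + ε ≤ t' ∧
            r = |v - t'| ^ p + |v' - t| ^ p - |v - t| ^ p - |v' - t'| ^ p} := by
  have hX₀ne : X₀.Nonempty := by
    by_contra h
    rw [Set.not_nonempty_iff_eq_empty] at h
    simp only [h, measure_empty, ENNReal.toReal_zero] at hmX₀
    linarith
  have hX₀ne' : X₀'.Nonempty := by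
    by_contra h
    rw [Set.not_nonempty_iff_eq_empty] at h
    simp only [h, measure_empty, ENNReal.toReal_zero] at hmX₀'
    linarith
  have hc := isCompact_crossDiff hK ε hp
  -- Extremal values of the two functions on the two sets; they lie in `K` because `K` is closed.
  have hsubK : ∀ g : ℝ → ℝ, (∀ x ∈ Set.Icc (0:ℝ) 1, g x ∈ K) → ∀ S ⊆ Set.Icc (0:ℝ) 1,
      g '' S ⊆ K := by
    rintro g hg S hS _ ⟨x, hx, rfl⟩
    exact hg x (hS hx)
  have hsup : ∀ S ⊆ K, S.Nonempty → sSup S ∈ K := fun S hS hne =>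
    closure_minimal hS hK.isClosed (csSup_mem_closure hne (hK.bddAbove.mono hS))
  have hinf : ∀ S ⊆ K, S.Nonempty → sInf S ∈ K := fun S hS hne =>
    closure_minimal hS hK.isClosed (csInf_mem_closure hne (hK.bddBelow.mono hS))
  have hfX := hsubK fhat hfhatK X₀ hX₀
  have hfX' := hsubK fhat hfhatK X₀' hX₀'
  have h0X := hsubK f₀ hf₀K X₀ hX₀
  have h0X' := hsubK f₀ hf₀K X₀' hX₀'
  have hvK := hsup _ hfX' (hX₀ne'.image _)
  have hvK' := hinf _ hfX (hX₀ne.image _)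
  have htK := hsup _ h0X (hX₀ne.image _)
  have htK' := hinf _ h0X' (hX₀ne'.image _)
  set v := sSup (fhat '' X₀')
  set v' := sInf (fhat '' X₀)
  set t := sSup (f₀ '' X₀)
  set t' := sInf (f₀ '' X₀')
  have hv : v + ε ≤ v' := by
    refine le_csInf (hX₀ne.image _) ?_
    rintro _ ⟨x, hx, rfl⟩
    refine le_sub_iff_add_le.1 (csSup_le (hX₀ne'.image _) ?_)
    rintro _ ⟨x', hx', rfl⟩
    linarith [(hviol x hx x' hx').2.1]
  have ht : t + ε ≤ t' := by
    refine le_csInf (hX₀ne'.image _) ?_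
    rintro _ ⟨x', hx', rfl⟩
    refine le_sub_iff_add_le.1 (csSup_le (hX₀ne.image _) ?_)
    rintro _ ⟨x, hx, rfl⟩
    linarith [(hviol x hx x' hx').2.2]
  have hmem := (⟨v, v', t, t', hvK, hvK', htK, htK', hv, ht, rfl⟩ :
    ∃ w w' s s' : ℝ, w ∈ K ∧ w' ∈ K ∧ s ∈ K ∧ s' ∈ K ∧ w + ε ≤ w' ∧ s + ε ≤ s' ∧
      |v - t'| ^ p + |v' - t| ^ p - |v - t| ^ p - |v' - t'| ^ p
        = |w - s'| ^ p + |w' - s| ^ p - |w - s| ^ p - |w' - s'| ^ p)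
  refine ⟨?_, ?_⟩
  · obtain ⟨w, w', s, s', -, -, -, -, hw, hs, h⟩ := hc.sInf_mem ⟨_, hmem⟩
    rw [h]
    exact cross_diff_pos hp (by linarith) (by linarith)
  · obtain ⟨m, hm⟩ := hK.bddBelow
    obtain ⟨M, hM⟩ := hK.bddAbove
    have hKI : ∀ y ∈ K, y ∈ Set.Icc m M := fun y hy => ⟨hm hy, hM hy⟩
    have h1 := loss_improvement (fun s => hasDerivAt_abs_rpow s hp)
      (strictMono_deriv_abs_rpow hp).monotone hfhatmeas hf₀meas hf₀mono
      (fun x hx => hKI _ (hfhatK x hx)) (fun x hx => hKI _ (hf₀K x hx)) hX₀ hX₀' hδ.le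
      hmX₀ hmX₀' (hKI _ hvK) (hKI _ hvK') (by linarith)
      (fun x hx => ⟨csInf_le (hK.bddBelow.mono hfX) ⟨x, hx, rfl⟩,
        le_csSup (hK.bddAbove.mono h0X) ⟨x, hx, rfl⟩⟩)
      (fun x hx => ⟨le_csSup (hK.bddAbove.mono hfX') ⟨x, hx, rfl⟩,
        csInf_le (hK.bddBelow.mono h0X') ⟨x, hx, rfl⟩⟩)
    have h2 := mul_le_mul_of_nonneg_left (csInf_le hc.bddBelow hmem) hδ.le
    linarith
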